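/- Fix an integer m ≥ 2 and let f_m(x) = 2·T_m(x/2) be the generalised logistic map of degree m. Let p₀ ∈ L¹[−2,2] be a probability density (p₀ ≥ 0, ∫_{−2}^{2} p₀ = 1) and let μ₀ be the measure with density p₀ (supported in [−2,2]) with respect to Lebesgue measure. For each n, let p_n^m denote the Radon–Nikodym derivative of the pushforward measure (f_m^n)_*μ₀ with respect to Lebesgue measure. Then ∫_{−2}^{2} |p_n^m(x) − D(x)| dx → 0 as n → ∞, where D(x) = 1/(π·√(4−x²)) for −2 < x < 2. -/

import Mathlib

open MeasureTheory Filter Topology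

/-- The generalised logistic map of degree `m`: `f_m(x) = 2·T_m(x/2)`, where `T_m`
is the `m`-th Chebyshev polynomial of the first kind. -/
noncomputable def genLogistic (m : ℕ) (x : ℝ) : ℝ :=
  2 * (Polynomial.Chebyshev.T ℝ (m : ℤ)).eval (x / 2)

/-- The common invariant density `D(x) = 1/(π·√(4−x²))` on `(−2,2)`. -/
noncomputable def dosDensity (x : ℝ) : ℝ :=
  if -2 < x ∧ x < 2 then 1 / (Real.pi * Real.sqrt (4 - x ^ 2)) else 0

/-!
The map `f_k` is evaluation of the rescaled Chebyshev polynomial `C_k`, `C_k(2x) = 2 T_k(x)`, and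
if `ρ` is the measure of density `D`, then `∫ C_k ∂ρ = 0` for `k ≠ 0`. As `C_j ∘ C_n = C_{jn}` and
`C_i C_k = C_{i+k} + C_{i-k}`, the polynomial `C_k` is uncorrelated under `ρ` with every polynomial
in `C_n` once `n > |k|`. Hence `E_ρ[q | f_n]` is the constant `∫ q ∂ρ` for a polynomial `q` and
large `n`. Conditional expectation contracts `L¹(ρ)` and polynomials are dense there, so
`E_ρ[q | f_n]` converges to `∫ q ∂ρ` in `L¹(ρ)` for every integrable `q`. For `q = dμ/dρ` it is the
density of `(f_n)_* μ` with respect to `ρ`, composed with `f_n`, because `ρ` is `f_n`-invariant.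
Thus `(f_n)_* μ` converges as `n → ∞` through all integers, and the iterates of `f_m` are the
`f_{m^n}`.
-/

section ChebyshevFunctional

open Polynomial

variable {R : Type*} [CommRing R] [Invertible (2 : R)]

lemma span_range_chebyshevC_eq_top : Submodule.span R (Set.range (Chebyshev.C R)) = ⊤ := by
  have C_mem (k : ℤ) : Chebyshev.C R k ∈ Submodule.span R (Set.range (Chebyshev.C R)) :=
    Submodule.subset_span ⟨k, rfl⟩
  have X_mul_mem : ∀ q ∈ Submodule.span R (Set.range (Chebyshev.C R)),
      X * q ∈ Submodule.span R (Set.range (Chebyshev.C R)) := by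
    intro q hq
    induction hq using Submodule.span_induction with
    | mem _ h =>
      obtain ⟨k, rfl⟩ := h
      rw [← Chebyshev.C_one, Chebyshev.C_mul_C]
      exact add_mem (C_mem _) (C_mem _)
    | zero => simp
    | add p q _ _ hp hq => rw [mul_add]; exact add_mem hp hq
    | smul a q _ hq => rw [mul_smul_comm]; exact Submodule.smul_mem _ a hq
  have X_pow_mem (n : ℕ) : X ^ n ∈ Submodule.span R (Set.range (Chebyshev.C R)) := by
    induction n with
    | zero =>
      have one_eq : (X ^ 0 : R[X]) = ⅟(2 : R) • Chebyshev.C R 0 := by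
        rw [Chebyshev.C_zero, pow_zero, smul_eq_C_mul, ← map_ofNat (C : R →+* R[X]) 2, ← C_mul,
          invOf_mul_self, C_1]
      rw [one_eq]
      exact Submodule.smul_mem _ _ (C_mem 0)
    | succ n ih => rw [pow_succ']; exact X_mul_mem _ ih
  refine eq_top_iff.2 fun p _ => ?_
  rw [p.as_sum_range_C_mul_X_pow]
  refine sum_mem fun n _ => ?_
  rw [← smul_eq_C_mul]
  exact Submodule.smul_mem _ _ (X_pow_mem n)

variable {L : R[X] →ₗ[R] R}

lemma map_comp_chebyshevC (hL : ∀ k : ℤ, k ≠ 0 → L (Chebyshev.C R k) = 0) {n : ℤ} (hn : n ≠ 0)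
    (p : R[X]) : L (p.comp (Chebyshev.C R n)) = L p := by
  have hp : p ∈ Submodule.span R (Set.range (Chebyshev.C R)) := by
    simp only [span_range_chebyshevC_eq_top, Submodule.mem_top]
  induction hp using Submodule.span_induction with
  | mem _ h =>
    obtain ⟨j, rfl⟩ := h
    rw [← Chebyshev.C_mul]
    rcases eq_or_ne j 0 with rfl | hj
    · rw [zero_mul]
    · rw [hL _ (mul_ne_zero hj hn), hL j hj]
  | zero => rw [zero_comp]
  | add p q _ _ hp hq => rw [add_comp, map_add, map_add, hp, hq]
  | smul a p _ hp => rw [smul_comp, map_smul, map_smul, hp]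

lemma map_comp_chebyshevC_mul_chebyshevC (h1 : L 1 = 1)
    (hL : ∀ k : ℤ, k ≠ 0 → L (Chebyshev.C R k) = 0) {k n : ℤ} (hkn : |k| < n) (p : R[X]) :
    L (p.comp (Chebyshev.C R n) * Chebyshev.C R k) =
      L (p.comp (Chebyshev.C R n)) * L (Chebyshev.C R k) := by
  rcases eq_or_ne k 0 with rfl | hk
  · have two_eq : (2 : R[X]) = (2 : R) • 1 := by rw [smul_eq_C_mul, mul_one, map_ofNat]
    rw [Chebyshev.C_zero, two_eq, mul_smul_comm, mul_one, map_smul, map_smul, h1]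
    simp only [smul_eq_mul]
    ring
  have hp : p ∈ Submodule.span R (Set.range (Chebyshev.C R)) := by
    simp only [span_range_chebyshevC_eq_top, Submodule.mem_top]
  rw [hL k hk, mul_zero]
  induction hp using Submodule.span_induction with
  | mem _ h =>
    obtain ⟨j, rfl⟩ := h
    have not_dvd : ¬ n ∣ k := fun h => hk (Int.eq_zero_of_abs_lt_dvd h hkn)
    have add_ne : j * n + k ≠ 0 := fun h => not_dvd ⟨-j, by linarith⟩
    have sub_ne : j * n - k ≠ 0 := fun h => not_dvd ⟨j, by linarith⟩
    rw [← Chebyshev.C_mul, Chebyshev.C_mul_C, map_add, hL _ add_ne, hL _ sub_ne, add_zero]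
  | zero => rw [zero_comp, zero_mul, map_zero]
  | add p q _ _ hp hq => rw [add_comp, add_mul, map_add, hp, hq, add_zero]
  | smul a p _ hp => rw [smul_comp, smul_mul_assoc, map_smul, hp, smul_zero]

lemma eventually_map_comp_chebyshevC_mul (h1 : L 1 = 1)
    (hL : ∀ k : ℤ, k ≠ 0 → L (Chebyshev.C R k) = 0) (q : R[X]) :
    ∀ᶠ n : ℤ in atTop, ∀ p : R[X],
      L (p.comp (Chebyshev.C R n) * q) = L (p.comp (Chebyshev.C R n)) * L q := by
  have hq : q ∈ Submodule.span R (Set.range (Chebyshev.C R)) := by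
    simp only [span_range_chebyshevC_eq_top, Submodule.mem_top]
  induction hq using Submodule.span_induction with
  | mem _ h =>
    obtain ⟨k, rfl⟩ := h
    filter_upwards [eventually_gt_atTop |k|] with n hn p
    exact map_comp_chebyshevC_mul_chebyshevC h1 hL hn p
  | zero => simp
  | add q r _ _ hq hr =>
    filter_upwards [hq, hr] with n hq hr p
    rw [mul_add, map_add, map_add, mul_add, hq, hr]
  | smul a q _ hq =>
    filter_upwards [hq] with n hq p
    rw [mul_smul_comm, map_smul, map_smul, hq, mul_smul_comm]

end ChebyshevFunctional

section PolynomialApproximation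

open Polynomial Set

variable {μ ν : Measure ℝ} [IsFiniteMeasure μ] [IsFiniteMeasure ν] {a b : ℝ}

lemma integrable_of_continuous_of_ae_mem_Icc (hμ : ∀ᵐ x ∂μ, x ∈ Icc a b) {f : ℝ → ℝ}
    (hf : Continuous f) : Integrable f μ := by
  rw [← Measure.restrict_eq_self_of_ae_mem hμ]
  exact hf.continuousOn.integrableOn_Icc

lemma exists_polynomial_integral_abs_sub_le (hμ : ∀ᵐ x ∂μ, x ∈ Icc a b) {f : ℝ → ℝ}
    (hf : Integrable f μ) {ε : ℝ} (hε : 0 < ε) :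
    ∃ p : ℝ[X], ∫ x, |f x - p.eval x| ∂μ ≤ ε := by
  obtain ⟨g, -, hfg, hg, hgi⟩ := hf.exists_hasCompactSupport_integral_sub_le (half_pos hε)
  have hδ : 0 < ε / 2 / (μ.real univ + 1) := by positivity
  obtain ⟨p, hp⟩ := exists_polynomial_near_of_continuousOn a b g hg.continuousOn _ hδ
  have hpi : Integrable (fun x => p.eval x) μ :=
    integrable_of_continuous_of_ae_mem_Icc hμ p.continuous
  have hgp : ∫ x, |g x - p.eval x| ∂μ ≤ ε / 2 := calc
    ∫ x, |g x - p.eval x| ∂μ ≤ ∫ _, ε / 2 / (μ.real univ + 1) ∂μ := by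
      refine integral_mono_ae (hgi.sub hpi).abs (integrable_const _) ?_
      filter_upwards [hμ] with x hx
      rw [abs_sub_comm]
      exact (hp x hx).le
    _ = ε / 2 * (μ.real univ / (μ.real univ + 1)) := by
      rw [integral_const, smul_eq_mul]; ring
    _ ≤ ε / 2 := mul_le_of_le_one_right (half_pos hε).le
      (div_le_one_of_le₀ (by linarith) (by positivity))
  refine ⟨p, ?_⟩
  calc ∫ x, |f x - p.eval x| ∂μ
      ≤ ∫ x, (|f x - g x| + |g x - p.eval x|) ∂μ :=
        integral_mono (hf.sub hpi).abs ((hf.sub hgi).abs.add (hgi.sub hpi).abs)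
          fun x => abs_sub_le _ _ _
    _ = ∫ x, |f x - g x| ∂μ + ∫ x, |g x - p.eval x| ∂μ :=
        integral_add (hf.sub hgi).abs (hgi.sub hpi).abs
    _ ≤ ε := by
        simp only [Real.norm_eq_abs] at hfg
        linarith

lemma ext_of_forall_integral_polynomial_eq (hμ : ∀ᵐ x ∂μ, x ∈ Icc a b)
    (hν : ∀ᵐ x ∂ν, x ∈ Icc a b) (h : ∀ p : ℝ[X], ∫ x, p.eval x ∂μ = ∫ x, p.eval x ∂ν) :
    μ = ν := by
  refine ext_of_forall_integral_eq_of_IsFiniteMeasure fun f => ?_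
  refine eq_of_forall_dist_le fun ε hε => ?_
  obtain ⟨p, hp⟩ := exists_polynomial_integral_abs_sub_le (ae_add_measure_iff.2 ⟨hμ, hν⟩)
    (f.integrable (μ + ν)) hε
  have hpμ : Integrable (fun x => p.eval x) μ :=
    integrable_of_continuous_of_ae_mem_Icc hμ p.continuous
  have hpν : Integrable (fun x => p.eval x) ν :=
    integrable_of_continuous_of_ae_mem_Icc hν p.continuous
  have hfμ : Integrable (fun x => f x - p.eval x) μ := (f.integrable μ).sub hpμ
  have hfν : Integrable (fun x => f x - p.eval x) ν := (f.integrable ν).sub hpν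
  calc dist (∫ x, f x ∂μ) (∫ x, f x ∂ν)
      = |∫ x, (f x - p.eval x) ∂μ - ∫ x, (f x - p.eval x) ∂ν| := by
        rw [Real.dist_eq, integral_sub (f.integrable μ) hpμ, integral_sub (f.integrable ν) hpν, h p]
        congr 1
        ring
    _ ≤ |∫ x, (f x - p.eval x) ∂μ| + |∫ x, (f x - p.eval x) ∂ν| := abs_sub _ _
    _ ≤ ∫ x, |f x - p.eval x| ∂μ + ∫ x, |f x - p.eval x| ∂ν :=
        add_le_add abs_integral_le_integral_abs abs_integral_le_integral_abs
    _ ≤ ε := by rwa [← integral_add_measure hfμ.abs hfν.abs]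

variable {α : Type*} [MeasurableSpace α] {ρ : Measure α} {g f : α → ℝ}

lemma setIntegral_preimage_eq_zero_of_forall_integral_polynomial (hg : Measurable g)
    (hgab : ∀ᵐ x ∂ρ, g x ∈ Icc a b) (hf : Integrable f ρ)
    (h : ∀ p : ℝ[X], ∫ x, p.eval (g x) * f x ∂ρ = 0) {s : Set ℝ} (hs : MeasurableSet s) :
    ∫ x in g ⁻¹' s, f x ∂ρ = 0 := by
  -- Indicators are approximated by polynomials in `L¹` of the image under `g` of `|f| dρ`.
  set κ : Measure α := ρ.withDensity (fun x => ‖f x‖₊)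
  have : IsFiniteMeasure κ := isFiniteMeasure_withDensity hf.2.ne
  have hκab : ∀ᵐ y ∂κ.map g, y ∈ Icc a b :=
    (ae_map_iff hg.aemeasurable measurableSet_Icc).2
      ((withDensity_absolutelyContinuous ρ _).ae_le hgab)
  set φ : ℝ → ℝ := s.indicator 1
  have hφ : Integrable φ (κ.map g) := (integrable_const 1).indicator hs
  have hφf : (fun x => φ (g x) * f x) = (g ⁻¹' s).indicator f := by
    ext x
    by_cases hx : g x ∈ s <;> simp [φ, hx]
  have hφfi : Integrable (fun x => φ (g x) * f x) ρ := by
    rw [hφf]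
    exact hf.indicator (hg hs)
  rw [← integral_indicator (hg hs), ← hφf]
  refine eq_of_forall_dist_le fun ε hε => ?_
  obtain ⟨p, hp⟩ := exists_polynomial_integral_abs_sub_le hκab hφ hε
  have hpf : Integrable (fun x => p.eval (g x) * f x) ρ := by
    obtain ⟨c, hc⟩ := isCompact_Icc.exists_bound_of_continuousOn
      (p.continuous.continuousOn (s := Icc a b))
    exact hf.bdd_mul (p.continuous.measurable.comp hg).aestronglyMeasurable
      (hgab.mono fun x hx => hc _ hx)
  calc dist (∫ x, φ (g x) * f x ∂ρ) 0
      = |∫ x, (φ (g x) - p.eval (g x)) * f x ∂ρ| := by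
        simp only [sub_mul]
        rw [integral_sub hφfi hpf, h p, sub_zero, Real.dist_0_eq_abs]
    _ ≤ ∫ x, |(φ (g x) - p.eval (g x)) * f x| ∂ρ := abs_integral_le_integral_abs
    _ = ∫ x, |φ (g x) - p.eval (g x)| ∂κ := by
        rw [integral_withDensity_eq_integral_smul₀ hf.1.aemeasurable.nnnorm]
        simp only [abs_mul, mul_comm, NNReal.smul_def, coe_nnnorm, Real.norm_eq_abs, smul_eq_mul]
    _ = ∫ y, |φ y - p.eval y| ∂κ.map g :=
        (integral_map hg.aemeasurable
          (hφ.1.sub p.continuous.aestronglyMeasurable).norm).symm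
    _ ≤ ε := hp

lemma condExp_comap_ae_eq_zero_of_forall_integral_polynomial (hg : Measurable g)
    [SigmaFinite (ρ.trim hg.comap_le)] (hgab : ∀ᵐ x ∂ρ, g x ∈ Icc a b) (hf : Integrable f ρ)
    (h : ∀ p : ℝ[X], ∫ x, p.eval (g x) * f x ∂ρ = 0) :
    ρ[f | MeasurableSpace.comap g inferInstance] =ᵐ[ρ] 0 := by
  refine (ae_eq_condExp_of_forall_setIntegral_eq hg.comap_le hf
    (fun s _ _ => integrableOn_zero) ?_ aestronglyMeasurable_zero).symm
  rintro _ ⟨s, hs, rfl⟩ -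
  exact integral_zero _ _ |>.trans
    (setIntegral_preimage_eq_zero_of_forall_integral_polynomial hg hgab hf h hs).symm

end PolynomialApproximation

section DosMeasure

open Polynomial Real Set

/-- The probability measure with density `dosDensity`: the common invariant measure of the maps
`genLogistic n` with `n ≠ 0`. -/
noncomputable def dosMeasure : Measure ℝ :=
  volume.withDensity fun x => ENNReal.ofReal (dosDensity x)

-- Outside `(-2, 2)` the square root is `0`, and so is its inverse.
lemma dosDensity_eq_inv (x : ℝ) : dosDensity x = (π * √(4 - x ^ 2))⁻¹ := by
  unfold dosDensity
  split_ifs with hx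
  · exact one_div _
  · have h : 4 - x ^ 2 ≤ 0 := by
      by_contra! h
      exact hx ⟨by nlinarith, by nlinarith⟩
    rw [sqrt_eq_zero_of_nonpos h, mul_zero, inv_zero]

lemma dosDensity_nonneg (x : ℝ) : 0 ≤ dosDensity x := by
  rw [dosDensity_eq_inv]
  positivity

lemma dosDensity_pos {x : ℝ} (hx : x ∈ Ioo (-2 : ℝ) 2) : 0 < dosDensity x := by
  have h : 0 < 4 - x ^ 2 := by nlinarith [hx.1, hx.2]
  rw [dosDensity_eq_inv]
  positivity

lemma dosDensity_eq_zero {x : ℝ} (hx : x ∉ Ioo (-2 : ℝ) 2) : dosDensity x = 0 := if_neg hx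

lemma measurable_dosDensity : Measurable dosDensity := by
  rw [funext dosDensity_eq_inv]
  fun_prop

lemma integral_dosMeasure (f : ℝ → ℝ) : ∫ x, f x ∂dosMeasure = ∫ x, dosDensity x * f x := by
  rw [dosMeasure, integral_withDensity_eq_integral_toReal_smul
    measurable_dosDensity.ennreal_ofReal (ae_of_all _ fun _ => ENNReal.ofReal_lt_top)]
  simp only [ENNReal.toReal_ofReal (dosDensity_nonneg _), smul_eq_mul]

lemma integral_dosMeasure_eq_integral_measureT (f : ℝ → ℝ) :
    ∫ x, f x ∂dosMeasure = π⁻¹ * ∫ x, f (2 * x) ∂Chebyshev.measureT := by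
  have dosDensity_two_mul (x : ℝ) : dosDensity (2 * x) = (2 * π)⁻¹ * √(1 - x ^ 2)⁻¹ := by
    rw [dosDensity_eq_inv, sqrt_inv, ← mul_inv,
      show 4 - (2 * x) ^ 2 = 2 ^ 2 * (1 - x ^ 2) by ring, sqrt_mul (by positivity),
      sqrt_sq zero_le_two]
    ring
  have sqrt_inv_eq_zero {x : ℝ} (hx : x ∉ Ioc (-1 : ℝ) 1) : √(1 - x ^ 2)⁻¹ = 0 := by
    have h : 1 - x ^ 2 ≤ 0 := by
      by_contra! h
      exact hx ⟨by nlinarith, by nlinarith⟩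
    exact sqrt_eq_zero_of_nonpos (inv_nonpos.2 h)
  calc ∫ x, f x ∂dosMeasure
      = 2 * ∫ x, dosDensity (2 * x) * f (2 * x) := by
        rw [integral_dosMeasure, Measure.integral_comp_mul_left (fun x => dosDensity x * f x) 2]
        simp only [abs_of_pos (inv_pos.2 (zero_lt_two' ℝ)), smul_eq_mul]
        ring
    _ = π⁻¹ * ∫ x, f (2 * x) * √(1 - x ^ 2)⁻¹ := by
        rw [← integral_const_mul, ← integral_const_mul]
        congr 1 with x
        rw [dosDensity_two_mul]
        ring
    _ = π⁻¹ * ∫ x, f (2 * x) ∂Chebyshev.measureT := by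
        rw [Chebyshev.integral_measureT, intervalIntegral.integral_of_le (by norm_num),
          setIntegral_eq_integral_of_forall_compl_eq_zero fun x hx => by
            rw [sqrt_inv_eq_zero hx, mul_zero]]

instance : IsProbabilityMeasure dosMeasure := by
  have integral_one : ∫ _, (1 : ℝ) ∂dosMeasure = 1 := by
    have h := Chebyshev.integral_eval_T_real_measureT_zero
    simp only [Chebyshev.T_zero, eval_one] at h
    rw [integral_dosMeasure_eq_integral_measureT, h, inv_mul_cancel₀ pi_ne_zero]
  have : IsFiniteMeasure dosMeasure :=
    (integrable_const_iff_isFiniteMeasure one_ne_zero).1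
      (.of_integral_ne_zero (integral_one.trans_ne one_ne_zero))
  refine ⟨(ENNReal.toReal_eq_one_iff _).1 ?_⟩
  rwa [integral_const, smul_eq_mul, mul_one] at integral_one

lemma ae_dosMeasure_mem_Icc : ∀ᵐ x ∂dosMeasure, x ∈ Icc (-2 : ℝ) 2 := by
  rw [dosMeasure, ae_withDensity_iff measurable_dosDensity.ennreal_ofReal]
  refine ae_of_all _ fun x hx => ?_
  by_contra hx'
  exact hx (by rw [dosDensity_eq_zero fun h => hx' (Ioo_subset_Icc_self h), ENNReal.ofReal_zero])

lemma integrable_polynomial_dosMeasure (p : ℝ[X]) : Integrable (fun x => p.eval x) dosMeasure :=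
  integrable_of_continuous_of_ae_mem_Icc ae_dosMeasure_mem_Icc p.continuous

/-- Integration of polynomials against `dosMeasure`, as a linear functional that vanishes on the
Chebyshev polynomials `C_k` with `k ≠ 0`. -/
noncomputable def dosIntegral : ℝ[X] →ₗ[ℝ] ℝ where
  toFun p := ∫ x, p.eval x ∂dosMeasure
  map_add' p q := by
    simp only [eval_add]
    exact integral_add (integrable_polynomial_dosMeasure p) (integrable_polynomial_dosMeasure q)
  map_smul' c p := by
    simp only [eval_smul, smul_eq_mul, integral_const_mul, RingHom.id_apply]

lemma dosIntegral_apply (p : ℝ[X]) : dosIntegral p = ∫ x, p.eval x ∂dosMeasure := rfl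

lemma dosIntegral_one : dosIntegral 1 = 1 := by
  simp only [dosIntegral_apply, eval_one, integral_const, probReal_univ, smul_eq_mul, mul_one]

lemma dosIntegral_chebyshevC (k : ℤ) (hk : k ≠ 0) : dosIntegral (Chebyshev.C ℝ k) = 0 := by
  have C_two_mul (x : ℝ) : (Chebyshev.C ℝ k).eval (2 * x) = 2 * (Chebyshev.T ℝ k).eval x := by
    simpa using congr_arg (eval x) (Chebyshev.C_comp_two_mul_X ℝ k)
  simp only [dosIntegral_apply, integral_dosMeasure_eq_integral_measureT, C_two_mul,
    integral_const_mul, Chebyshev.integral_eval_T_real_measureT_of_ne_zero hk, mul_zero]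

lemma genLogistic_eq_eval_chebyshevC (n : ℕ) (x : ℝ) :
    genLogistic n x = (Chebyshev.C ℝ n).eval x := by
  have h := congr_arg (eval (x / 2)) (Chebyshev.C_comp_two_mul_X ℝ n)
  simp only [eval_comp, eval_mul, eval_ofNat, eval_X, mul_div_cancel₀ x (two_ne_zero' ℝ)] at h
  exact h.symm

lemma measurable_genLogistic (n : ℕ) : Measurable (genLogistic n) := by
  rw [funext (genLogistic_eq_eval_chebyshevC n)]
  exact (Chebyshev.C ℝ n).continuous.measurable

lemma genLogistic_mem_Icc_iff {n : ℕ} (hn : n ≠ 0) {x : ℝ} :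
    genLogistic n x ∈ Icc (-2 : ℝ) 2 ↔ x ∈ Icc (-2 : ℝ) 2 := by
  have h := Chebyshev.abs_eval_T_real_le_one_iff (Nat.cast_ne_zero.2 hn : (n : ℤ) ≠ 0) (x / 2)
  rw [genLogistic, mem_Icc, mem_Icc, ← abs_le, ← abs_le, abs_mul, abs_two]
  rw [abs_div, abs_two] at h
  constructor <;> intro hx
  · linarith [h.2 (by linarith)]
  · linarith [h.1 (by linarith)]

lemma genLogistic_iterate (m n : ℕ) : (genLogistic m)^[n] = genLogistic (m ^ n) := by
  induction n with
  | zero =>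
    ext x
    rw [Function.iterate_zero, pow_zero, genLogistic_eq_eval_chebyshevC, Nat.cast_one,
      Chebyshev.C_one, eval_X, id]
  | succ n ih =>
    ext x
    simp only [Function.iterate_succ', ih, Function.comp_apply, genLogistic_eq_eval_chebyshevC,
      pow_succ', Nat.cast_mul, Chebyshev.C_mul, eval_comp]

lemma measurePreserving_genLogistic {n : ℕ} (hn : n ≠ 0) :
    MeasurePreserving (genLogistic n) dosMeasure dosMeasure := by
  refine ⟨measurable_genLogistic n, ?_⟩
  refine ext_of_forall_integral_polynomial_eq
    ((ae_map_iff (measurable_genLogistic n).aemeasurable measurableSet_Icc).2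
      (ae_dosMeasure_mem_Icc.mono fun _ => (genLogistic_mem_Icc_iff hn).2))
    ae_dosMeasure_mem_Icc fun p => ?_
  rw [integral_map (measurable_genLogistic n).aemeasurable p.continuous.aestronglyMeasurable]
  simp only [genLogistic_eq_eval_chebyshevC, ← eval_comp]
  exact map_comp_chebyshevC dosIntegral_chebyshevC (Nat.cast_ne_zero.2 hn) p

end DosMeasure

section CondExp

open Polynomial Set

lemma eventually_condExp_comap_genLogistic_polynomial (q : ℝ[X]) :
    ∀ᶠ n : ℕ in atTop,
      dosMeasure[fun x => q.eval x | Real.measurableSpace.comap (genLogistic n)]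
        =ᵐ[dosMeasure] fun _ => dosIntegral q := by
  have hq₀ : dosIntegral (q - dosIntegral q • 1) = 0 := by
    rw [map_sub, map_smul, dosIntegral_one, smul_eq_mul, mul_one, sub_self]
  filter_upwards [eventually_ne_atTop 0, tendsto_natCast_atTop_atTop.eventually
    (eventually_map_comp_chebyshevC_mul dosIntegral_one dosIntegral_chebyshevC
      (q - dosIntegral q • 1))] with n hn hcomp
  have condExp_sub_eq_zero :
      dosMeasure[(fun x => q.eval x) - fun _ => dosIntegral q |
        Real.measurableSpace.comap (genLogistic n)] =ᵐ[dosMeasure] 0 := by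
    refine condExp_comap_ae_eq_zero_of_forall_integral_polynomial (measurable_genLogistic n)
      (ae_dosMeasure_mem_Icc.mono fun _ => (genLogistic_mem_Icc_iff hn).2)
      ((integrable_polynomial_dosMeasure q).sub (integrable_const _)) fun p => ?_
    have h := hcomp p
    rw [hq₀, mul_zero] at h
    simpa only [dosIntegral_apply, eval_mul, eval_comp, eval_sub, eval_smul, eval_one, smul_eq_mul,
      mul_one, ← genLogistic_eq_eval_chebyshevC, Pi.sub_apply] using h
  have hsub := condExp_sub (integrable_polynomial_dosMeasure q)
    (integrable_const (dosIntegral q)) (Real.measurableSpace.comap (genLogistic n))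
  rw [condExp_const (measurable_genLogistic n).comap_le] at hsub
  filter_upwards [hsub, condExp_sub_eq_zero] with x hx hx₀
  exact sub_eq_zero.1 (hx.symm.trans hx₀)

lemma tendsto_integral_abs_condExp_comap_genLogistic_sub {f : ℝ → ℝ}
    (hf : Integrable f dosMeasure) :
    Tendsto
      (fun n : ℕ => ∫ x, |(dosMeasure[f | Real.measurableSpace.comap (genLogistic n)]) x -
        ∫ y, f y ∂dosMeasure| ∂dosMeasure)
      atTop (𝓝 0) := by
  refine Metric.tendsto_nhds.2 fun ε hε => ?_
  obtain ⟨p, hp⟩ :=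
    exists_polynomial_integral_abs_sub_le ae_dosMeasure_mem_Icc hf (by positivity : 0 < ε / 3)
  have hpi := integrable_polynomial_dosMeasure p
  filter_upwards [eventually_condExp_comap_genLogistic_polynomial p] with n hn
  have hsub := condExp_sub hf hpi (Real.measurableSpace.comap (genLogistic n))
  have integral_diff_le : |dosIntegral p - ∫ y, f y ∂dosMeasure| ≤ ε / 3 := by
    rw [abs_sub_comm, dosIntegral_apply, ← integral_sub hf hpi]
    exact abs_integral_le_integral_abs.trans hp
  rw [Real.dist_0_eq_abs, abs_of_nonneg (integral_nonneg fun _ => abs_nonneg _)]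
  calc ∫ x, |(dosMeasure[f | Real.measurableSpace.comap (genLogistic n)]) x -
        ∫ y, f y ∂dosMeasure| ∂dosMeasure
      ≤ ∫ x, (|(dosMeasure[f - (fun x => p.eval x) |
          Real.measurableSpace.comap (genLogistic n)]) x| + ε / 3) ∂dosMeasure := by
        refine integral_mono_ae (integrable_condExp.sub (integrable_const _)).abs
          (integrable_condExp.abs.add (integrable_const _)) ?_
        filter_upwards [hsub, hn] with x hx hxp
        rw [hx, Pi.sub_apply, hxp]
        exact (abs_sub_le _ (dosIntegral p) _).trans (add_le_add le_rfl integral_diff_le)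
    _ = ∫ x, |(dosMeasure[f - (fun x => p.eval x) |
          Real.measurableSpace.comap (genLogistic n)]) x| ∂dosMeasure + ε / 3 := by
        rw [integral_add integrable_condExp.abs (integrable_const _), integral_const,
          probReal_univ, one_smul]
    _ ≤ ∫ x, |f x - p.eval x| ∂dosMeasure + ε / 3 :=
        add_le_add (integral_abs_condExp_le (f - fun x => p.eval x)) le_rfl
    _ < ε := by linarith

end CondExp

section RadonNikodym

variable {α : Type*} [MeasurableSpace α] {μ ν κ : Measure α}

lemma integral_abs_toReal_rnDeriv_map_sub [IsFiniteMeasure μ] [SigmaFinite ν] (hμν : μ ≪ ν)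
    {g : α → α} (hg : MeasurePreserving g ν ν) (c : ℝ) :
    ∫ x, |((μ.map g).rnDeriv ν x).toReal - c| ∂ν =
      ∫ x, |(ν[fun x => (μ.rnDeriv ν x).toReal |
        MeasurableSpace.comap g inferInstance]) x - c| ∂ν := by
  have : SigmaFinite (ν.map g) := by rwa [hg.map_eq]
  have h := toReal_rnDeriv_map hμν hg.measurable
  rw [hg.map_eq] at h
  have h_meas : Measurable fun y => |((μ.map g).rnDeriv ν y).toReal - c| :=
    ((Measure.measurable_rnDeriv _ _).ennreal_toReal.sub_const c).norm
  calc ∫ x, |((μ.map g).rnDeriv ν x).toReal - c| ∂ν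
      = ∫ x, |((μ.map g).rnDeriv ν (g x)).toReal - c| ∂ν := by
        rw [← integral_map (f := fun y => |((μ.map g).rnDeriv ν y).toReal - c|) hg.aemeasurable
          h_meas.aestronglyMeasurable, hg.map_eq]
    _ = _ := integral_congr_ae (h.mono fun x hx => by simp only [hx])

lemma integral_abs_toReal_rnDeriv_sub_mul [SigmaFinite μ] [SigmaFinite ν] [SigmaFinite κ]
    (hμν : μ ≪ ν) (hνκ : ν ≪ κ) (c : ℝ) :
    ∫ x, |(μ.rnDeriv κ x).toReal - c * (ν.rnDeriv κ x).toReal| ∂κ =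
      ∫ x, |(μ.rnDeriv ν x).toReal - c| ∂ν := by
  rw [← integral_rnDeriv_smul hνκ]
  refine integral_congr_ae ?_
  filter_upwards [Measure.rnDeriv_mul_rnDeriv (κ := κ) hμν] with x hx
  rw [← hx, Pi.mul_apply, ENNReal.toReal_mul, ← sub_mul, abs_mul,
    abs_of_nonneg ENNReal.toReal_nonneg, smul_eq_mul, mul_comm]

lemma withDensity_ofReal_apply_eq_ofReal_setIntegral {f : α → ℝ} {s : Set α}
    (hs : MeasurableSet s) (hf : IntegrableOn f s μ) (hf₀ : 0 ≤ᵐ[μ.restrict s] f) :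
    μ.withDensity (fun x => ENNReal.ofReal (f x)) s = ENNReal.ofReal (∫ x in s, f x ∂μ) := by
  rw [withDensity_apply _ hs, ofReal_integral_eq_lintegral_ofReal hf hf₀]

end RadonNikodym

section Convergence

open Set

lemma dosMeasure_absolutelyContinuous : dosMeasure ≪ volume :=
  withDensity_absolutelyContinuous _ _

lemma volume_restrict_Icc_absolutelyContinuous_dosMeasure :
    volume.restrict (Icc (-2 : ℝ) 2) ≪ dosMeasure := by
  rw [← restrict_Ioo_eq_restrict_Icc]
  refine (withDensity_absolutelyContinuous' measurable_dosDensity.ennreal_ofReal.aemeasurable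
    ?_).trans (?_ : _ ≪ dosMeasure)
  · filter_upwards [ae_restrict_mem measurableSet_Ioo] with x hx
    exact (ENNReal.ofReal_pos.2 (dosDensity_pos hx)).ne'
  · rw [← restrict_withDensity measurableSet_Ioo]
    exact Measure.restrict_le_self.absolutelyContinuous

lemma tendsto_integral_abs_rnDeriv_map_genLogistic_dosMeasure {μ : Measure ℝ} [IsFiniteMeasure μ]
    (hμ : μ ≪ dosMeasure) :
    Tendsto (fun n : ℕ => ∫ x, |((μ.map (genLogistic n)).rnDeriv dosMeasure x).toReal -
      μ.real univ| ∂dosMeasure) atTop (𝓝 0) := by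
  refine (tendsto_integral_abs_condExp_comap_genLogistic_sub
    (Measure.integrable_toReal_rnDeriv (μ := μ))).congr' ?_
  filter_upwards [eventually_ne_atTop 0] with n hn
  rw [Measure.integral_toReal_rnDeriv hμ]
  exact (integral_abs_toReal_rnDeriv_map_sub hμ (measurePreserving_genLogistic hn) _).symm

lemma integral_abs_rnDeriv_volume_sub_dosDensity {μ : Measure ℝ} [SigmaFinite μ]
    (hμ : μ ≪ dosMeasure) (c : ℝ) :
    ∫ x, |(μ.rnDeriv volume x).toReal - c * dosDensity x| =
      ∫ x, |(μ.rnDeriv dosMeasure x).toReal - c| ∂dosMeasure := by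
  rw [← integral_abs_toReal_rnDeriv_sub_mul hμ dosMeasure_absolutelyContinuous]
  refine integral_congr_ae ?_
  filter_upwards [Measure.rnDeriv_withDensity volume measurable_dosDensity.ennreal_ofReal]
    with x hx
  rw [dosMeasure, hx, ENNReal.toReal_ofReal (dosDensity_nonneg x)]

lemma setIntegral_abs_rnDeriv_sub_dosDensity (μ : Measure ℝ) [SFinite μ] (c : ℝ) :
    ∫ x in Icc (-2) 2, |(μ.rnDeriv volume x).toReal - c * dosDensity x| =
      ∫ x, |((μ.restrict (Icc (-2) 2)).rnDeriv volume x).toReal - c * dosDensity x| := by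
  rw [← integral_indicator measurableSet_Icc]
  refine integral_congr_ae ?_
  filter_upwards [Measure.rnDeriv_restrict μ volume (measurableSet_Icc (a := (-2 : ℝ)) (b := 2))]
    with x hx
  rw [hx]
  by_cases h : x ∈ Icc (-2 : ℝ) 2
  · rw [indicator_of_mem h, indicator_of_mem h]
  · rw [indicator_of_notMem h, indicator_of_notMem h,
      dosDensity_eq_zero fun h' => h (Ioo_subset_Icc_self h'), ENNReal.toReal_zero, mul_zero,
      sub_zero, abs_zero]

lemma restrict_map_genLogistic {n : ℕ} (hn : n ≠ 0) (μ : Measure ℝ) :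
    (μ.map (genLogistic n)).restrict (Icc (-2) 2) =
      (μ.restrict (Icc (-2) 2)).map (genLogistic n) := by
  rw [Measure.restrict_map (measurable_genLogistic n) measurableSet_Icc,
    show genLogistic n ⁻¹' Icc (-2) 2 = Icc (-2) 2 from ext fun _ => genLogistic_mem_Icc_iff hn]

theorem genLogistic_L1_convergence_general (μ : Measure ℝ) [SFinite μ]
    (hac : μ.restrict (Icc (-2) 2) ≪ volume) (hfin : μ (Icc (-2) 2) ≠ ⊤) :
    Tendsto
      (fun k : ℕ => ∫ x in Icc (-2 : ℝ) 2,
        |((μ.map (genLogistic k)).rnDeriv volume x).toReal -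
          μ.real (Icc (-2) 2) * dosDensity x|)
      atTop (𝓝 0) := by
  set μ' := μ.restrict (Icc (-2) 2) with hμ'
  have : IsFiniteMeasure μ' := isFiniteMeasure_restrict.2 hfin
  have hμ'dos : μ' ≪ dosMeasure := by
    have h := hac.restrict (Icc (-2) 2)
    rw [hμ', Measure.restrict_restrict measurableSet_Icc, inter_self] at h
    exact h.trans volume_restrict_Icc_absolutelyContinuous_dosMeasure
  refine (tendsto_integral_abs_rnDeriv_map_genLogistic_dosMeasure hμ'dos).congr' ?_
  filter_upwards [eventually_ne_atTop 0] with k hk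
  have hmap : μ'.map (genLogistic k) ≪ dosMeasure := by
    rw [← (measurePreserving_genLogistic hk).map_eq]
    exact hμ'dos.map (measurable_genLogistic k)
  rw [setIntegral_abs_rnDeriv_sub_dosDensity, restrict_map_genLogistic hk,
    integral_abs_rnDeriv_volume_sub_dosDensity hmap, measureReal_restrict_apply_univ]

end Convergence

/-- For `m ≥ 2` and an initial probability density `p₀ ∈ L¹[−2,2]`,
the densities `pₙᵐ` of the pushforward measures `(f_mⁿ)_* μ₀` converge to the
invariant density `D` in `L¹[−2,2]`. -/
theorem genLogistic_L1_convergence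
    (m : ℕ) (hm : 2 ≤ m)
    (p₀ : ℝ → ℝ) (hmeas : Measurable p₀) (hpos : ∀ x, 0 ≤ p₀ x)
    (hsupp : ∀ x, x ∉ Set.Icc (-2 : ℝ) 2 → p₀ x = 0)
    (hint : IntegrableOn p₀ (Set.Icc (-2 : ℝ) 2))
    (hnorm : ∫ x in Set.Icc (-2 : ℝ) 2, p₀ x = 1) :
    Tendsto
      (fun n : ℕ => ∫ x in Set.Icc (-2 : ℝ) 2,
        |((((volume.withDensity (fun y => ENNReal.ofReal (p₀ y))).map
            ((genLogistic m)^[n])).rnDeriv volume) x).toReal - dosDensity x|)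
      atTop (𝓝 0) := by
  have mass := withDensity_ofReal_apply_eq_ofReal_setIntegral measurableSet_Icc hint
    (ae_of_all _ hpos)
  rw [hnorm, ENNReal.ofReal_one] at mass
  have h := (genLogistic_L1_convergence_general _
    (Measure.restrict_le_self.absolutelyContinuous.trans (withDensity_absolutelyContinuous _ _))
    (mass.trans_ne ENNReal.one_ne_top)).comp (tendsto_pow_atTop_atTop_of_one_lt hm)
  simpa only [Function.comp_def, ← genLogistic_iterate, measureReal_def, mass, ENNReal.toReal_one,
    one_mul] using h
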